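/- arXiv:1509.07908 — 3 statements merged into one kernel-verified Lean document; each statement's English description precedes it below -/
import Mathlib

section
/- Let d and m be positive integers and 0 < δ < 1. Then there exists a positive integer n = n(d,m,δ) such that: given any family T₁, T₂, …, T_n of n sets in ℝ^d, each of diameter at least one, there is a partition of {T₁,…,T_n} into m parts A₁, A₂, …, A_m such that the intersection ∩_{i=1}^{m} conv(∪A_i) of the convex hulls of the unions of the parts has diameter at least 1 − δ. -/
/-!
Pick in each set two points realising almost the whole diameter. A finite set of functionals
norms `E` up to a factor `1 - ε`, so by the pigeonhole principle one functional `g` separates a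
large number of these pairs `(x j, y j)` by at least `1 - δ`. A Tverberg point `(p, q)` of these
pairs, now seen as points of `E × E`, has `p` and `q` in every `conv (⋃ Aᵢ)`; moreover `(p, q)`
inherits the bound `1 - δ ≤ g (q - p)`, because it is a convex condition on the pair.

A Tverberg theorem with a non-optimal number of points suffices: by Helly's theorem many points
have a deep point (the centerpoint theorem), and Carathéodory's theorem lets one split off, one
colour at a time, a few points whose convex hull contains it.
-/

open Finset Module

section Convex

variable {ι 𝕜 E : Type*} [Field 𝕜] [LinearOrder 𝕜] [AddCommGroup E] [Module 𝕜 E]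

variable (𝕜) in
/-- `p` is a deep point of the indexed points `z j`, `j ∈ S`, when it stays in their convex hull
after the removal of at most `k` of them; equivalently, its Tukey depth exceeds `k`. The removal of
`S \ R` is counted by `#S ≤ #R + k`, which avoids subtraction. -/
def IsDeepPoint (z : ι → E) (S : Finset ι) (k : ℕ) (p : E) : Prop :=
  ∀ R ⊆ S, #S ≤ #R + k → p ∈ convexHull 𝕜 (z '' R)

lemma IsDeepPoint.mem_convexHull {z : ι → E} {S : Finset ι} {k : ℕ} {p : E}
    (hp : IsDeepPoint 𝕜 z S k p) : p ∈ convexHull 𝕜 (z '' S) :=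
  hp S Subset.rfl (Nat.le_add_right _ _)

lemma IsDeepPoint.sdiff [DecidableEq ι] {z : ι → E} {S C : Finset ι} {k l : ℕ} {p : E}
    (hp : IsDeepPoint 𝕜 z S (k + l) p) (hC : #C ≤ l) : IsDeepPoint 𝕜 z (S \ C) k p := by
  intro R hR hcard
  refine hp R (hR.trans sdiff_subset) ?_
  have : #S ≤ #(S \ C) + #C := card_le_card_sdiff_add_card
  omega

lemma mem_convexHull_image_of_prodMk {x y : ι → E} {J : Set ι} {p q : E}
    (h : (p, q) ∈ convexHull 𝕜 ((fun j ↦ (x j, y j)) '' J)) :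
    p ∈ convexHull 𝕜 (x '' J) ∧ q ∈ convexHull 𝕜 (y '' J) := by
  constructor
  · simpa only [LinearMap.image_convexHull, Set.image_image, LinearMap.fst_apply] using
      Set.mem_image_of_mem (LinearMap.fst 𝕜 E E) h
  · simpa only [LinearMap.image_convexHull, Set.image_image, LinearMap.snd_apply] using
      Set.mem_image_of_mem (LinearMap.snd 𝕜 E E) h

variable [IsStrictOrderedRing 𝕜]

lemma le_apply_sub_of_mem_convexHull_prodMk {x y : ι → E} {J : Set ι} {p q : E} {c : 𝕜}
    (g : E →ₗ[𝕜] 𝕜) (hg : ∀ j ∈ J, c ≤ g (y j - x j))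
    (h : (p, q) ∈ convexHull 𝕜 ((fun j ↦ (x j, y j)) '' J)) : c ≤ g (q - p) := by
  have hconv : Convex 𝕜 {w : E × E | c ≤ g (w.2 - w.1)} :=
    convex_halfSpace_ge (g ∘ₗ (LinearMap.snd 𝕜 E E - LinearMap.fst 𝕜 E E)).isLinear c
  have hJ : (fun j ↦ (x j, y j)) '' J ⊆ {w : E × E | c ≤ g (w.2 - w.1)} :=
    Set.image_subset_iff.2 hg
  exact convexHull_min hJ hconv h

variable [FiniteDimensional 𝕜 E]

lemma exists_isDeepPoint {z : ι → E} {S : Finset ι} {k : ℕ}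
    (hS : (finrank 𝕜 E + 1) * k < #S) : ∃ p, IsDeepPoint 𝕜 z S k p := by
  classical
  let F : Finset (Finset ι) := {R ∈ S.powerset | #S ≤ #R + k}
  have inter_nonempty : (⋂ R ∈ F, convexHull 𝕜 (z '' (R : Set ι))).Nonempty := by
    refine Convex.helly_theorem' (𝕜 := 𝕜) (fun R _ ↦ convex_convexHull 𝕜 _) fun I hI hI_card ↦ ?_
    have card_removed : #(I.biUnion (S \ ·)) ≤ (finrank 𝕜 E + 1) * k := by
      refine (card_biUnion_le_card_mul _ _ k fun R hR ↦ ?_).trans (Nat.mul_le_mul_right _ hI_card)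
      obtain ⟨hRS, hR_card⟩ := mem_filter.1 (hI hR)
      rw [card_sdiff_of_subset (mem_powerset.1 hRS)]
      omega
    obtain ⟨j, hjS, hj⟩ := exists_mem_notMem_of_card_lt_card (card_removed.trans_lt hS)
    refine ⟨z j, Set.mem_iInter₂.2 fun R hR ↦ subset_convexHull 𝕜 _ ⟨j, ?_, rfl⟩⟩
    by_contra hjR
    exact hj (mem_biUnion.2 ⟨R, hR, mem_sdiff.2 ⟨hjS, hjR⟩⟩)
  obtain ⟨p, hp⟩ := inter_nonempty
  exact ⟨p, fun R hRS hR ↦ Set.mem_iInter₂.1 hp R (mem_filter.2 ⟨mem_powerset.2 hRS, hR⟩)⟩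

lemma exists_subset_card_le_mem_convexHull_image {z : ι → E} {S : Finset ι} {p : E}
    (hp : p ∈ convexHull 𝕜 (z '' S)) :
    ∃ C ⊆ S, #C ≤ finrank 𝕜 E + 1 ∧ p ∈ convexHull 𝕜 (z '' C) := by
  classical
  rw [convexHull_eq_union] at hp
  obtain ⟨t, htS, ht_indep, hpt⟩ : ∃ t : Finset E, ↑t ⊆ z '' S ∧
      AffineIndependent 𝕜 ((↑) : t → E) ∧ p ∈ convexHull 𝕜 (t : Set E) := by
    simpa only [Set.mem_iUnion, exists_prop] using hp
  obtain ⟨C, hCS, hC_inj, rfl⟩ := exists_subset_injOn_image_eq_of_surjOn (S : Set ι) t htS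
  refine ⟨C, mod_cast hCS, ?_, by rwa [coe_image] at hpt⟩
  calc #C = Fintype.card (C.image z) := by rw [Fintype.card_coe, card_image_of_injOn hC_inj]
    _ ≤ finrank 𝕜 (vectorSpan 𝕜 (Set.range ((↑) : C.image z → E))) + 1 :=
      ht_indep.card_le_finrank_succ
    _ ≤ finrank 𝕜 E + 1 := by gcongr; exact Submodule.finrank_le _

lemma IsDeepPoint.exists_coloring {z : ι → E} {k : ℕ} {S : Finset ι} {p : E}
    (hp : IsDeepPoint 𝕜 z S (k * (finrank 𝕜 E + 1)) p) :
    ∃ f : ι → Fin (k + 1), ∀ i, p ∈ convexHull 𝕜 (z '' (S ∩ f ⁻¹' {i})) := by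
  classical
  induction k generalizing S with
  | zero =>
    refine ⟨fun _ ↦ 0, fun i ↦ convexHull_mono (Set.image_mono ?_) hp.mem_convexHull⟩
    exact fun j hj ↦ ⟨hj, (Fin.fin_one_eq_zero i).symm⟩
  | succ k ih =>
    obtain ⟨C, hCS, hC_card, hpC⟩ := exists_subset_card_le_mem_convexHull_image hp.mem_convexHull
    rw [Nat.succ_mul] at hp
    obtain ⟨f, hf⟩ := ih (hp.sdiff hC_card)
    refine ⟨fun j ↦ if j ∈ C then Fin.last _ else (f j).castSucc, fun i ↦ ?_⟩
    cases i using Fin.lastCases with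
    | last =>
      refine convexHull_mono (Set.image_mono ?_) hpC
      exact fun j hj ↦ ⟨hCS hj, if_pos hj⟩
    | cast i =>
      refine convexHull_mono (Set.image_mono ?_) (hf i)
      rintro j ⟨hj, rfl⟩
      obtain ⟨hjS, hjC⟩ := mem_sdiff.1 hj
      exact ⟨hjS, if_neg hjC⟩

lemma exists_coloring_forall_mem_convexHull (z : ι → E) {k : ℕ} {S : Finset ι}
    (hS : (finrank 𝕜 E + 1) * (k * (finrank 𝕜 E + 1)) < #S) :
    ∃ (f : ι → Fin (k + 1)) (p : E), ∀ i, p ∈ convexHull 𝕜 (z '' (S ∩ f ⁻¹' {i})) := by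
  obtain ⟨p, hp⟩ := exists_isDeepPoint (𝕜 := 𝕜) (z := z) hS
  obtain ⟨f, hf⟩ := hp.exists_coloring
  exact ⟨f, p, hf⟩

lemma exists_coloring_forall_mem_convexHull_pair {x y : ι → E} {k : ℕ} {S : Finset ι} {c : 𝕜}
    (g : E →ₗ[𝕜] 𝕜) (hg : ∀ j ∈ S, c ≤ g (y j - x j))
    (hS : (finrank 𝕜 (E × E) + 1) * (k * (finrank 𝕜 (E × E) + 1)) < #S) :
    ∃ (f : ι → Fin (k + 1)) (p q : E), c ≤ g (q - p) ∧
      ∀ i, p ∈ convexHull 𝕜 (x '' (S ∩ f ⁻¹' {i})) ∧ q ∈ convexHull 𝕜 (y '' (S ∩ f ⁻¹' {i})) := by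
  obtain ⟨f, ⟨p, q⟩, hpq⟩ := exists_coloring_forall_mem_convexHull (fun j ↦ (x j, y j)) hS
  exact ⟨f, p, q, le_apply_sub_of_mem_convexHull_prodMk g (fun j hj ↦ hg j hj.1) (hpq 0),
    fun i ↦ mem_convexHull_image_of_prodMk (hpq i)⟩

end Convex

section Diam

variable {X : Type*} [PseudoMetricSpace X] {s : Set X}

lemma isBounded_of_diam_pos (hs : 0 < Metric.diam s) : Bornology.IsBounded s :=
  not_imp_comm.1 Metric.diam_eq_zero_of_unbounded hs.ne'

lemma exists_lt_dist_of_lt_diam {r : ℝ} (hr : 0 ≤ r) (hs : r < Metric.diam s) :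
    ∃ x ∈ s, ∃ y ∈ s, r < dist x y := by
  by_contra! h
  exact hs.not_ge (Metric.diam_le_of_forall_dist_le hr h)

end Diam

section Normed

variable {E : Type*} [NormedAddCommGroup E] [NormedSpace ℝ E]

lemma le_diam_of_le_apply_sub {g : StrongDual ℝ E} (hg : ‖g‖ ≤ 1) {K : Set E}
    (hK : Bornology.IsBounded K) {p q : E} (hp : p ∈ K) (hq : q ∈ K) {c : ℝ}
    (hc : c ≤ g (q - p)) : c ≤ Metric.diam K :=
  calc c ≤ g (q - p) := hc
    _ ≤ ‖g (q - p)‖ := Real.le_norm_self _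
    _ ≤ 1 * ‖q - p‖ := g.le_of_opNorm_le hg _
    _ = dist q p := by rw [one_mul, dist_eq_norm]
    _ ≤ Metric.diam K := Metric.dist_le_diam_of_mem hK hq hp

lemma isBounded_iInter_convexHull {ι κ : Type*} [Finite ι] [Nonempty κ] {T : ι → Set E}
    (hT : ∀ j, Bornology.IsBounded (T j)) (J : κ → Set ι) :
    Bornology.IsBounded (⋂ i, convexHull ℝ (⋃ j ∈ J i, T j)) := by
  refine Bornology.IsBounded.subset ?_ (Set.iInter_subset _ (Classical.arbitrary κ))
  exact isBounded_convexHull.2 <|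
    (Bornology.isBounded_biUnion (Set.toFinite _)).2 fun j _ ↦ hT j

variable [FiniteDimensional ℝ E]

variable (E) in
lemma exists_finset_strongDual_norming {ε : ℝ} (hε : 0 < ε) :
    ∃ s : Finset (StrongDual ℝ E), (∀ g ∈ s, ‖g‖ ≤ 1) ∧
      ∀ w, ∃ g ∈ s, (1 - ε) * ‖w‖ ≤ g w := by
  have : ProperSpace (StrongDual ℝ E) := FiniteDimensional.proper ℝ _
  obtain ⟨s, hs, hs_fin, hcover⟩ :=
    finite_cover_balls_of_compact (isCompact_closedBall (0 : StrongDual ℝ E) 1) hε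
  lift s to Finset (StrongDual ℝ E) using hs_fin
  refine ⟨s, fun g hg ↦ mem_closedBall_zero_iff.1 (hs hg), fun w ↦ ?_⟩
  obtain ⟨h, h_norm, hw⟩ := exists_dual_vector'' ℝ w
  obtain ⟨g, hg, hgh⟩ := Set.mem_iUnion₂.1 (hcover (mem_closedBall_zero_iff.2 h_norm))
  have close : h w - g w ≤ ε * ‖w‖ :=
    (Real.le_norm_self _).trans ((h - g).le_of_opNorm_le (mem_ball_iff_norm.1 hgh).le w)
  have norming : h w = ‖w‖ := hw
  exact ⟨g, hg, by linarith⟩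

variable (E) in
lemma exists_finset_strongDual_separating {δ : ℝ} (hδ0 : 0 < δ) (hδ1 : δ < 1) :
    ∃ s : Finset (StrongDual ℝ E), (∀ g ∈ s, ‖g‖ ≤ 1) ∧
      ∀ T : Set E, 1 ≤ Metric.diam T → ∃ g ∈ s, ∃ x ∈ T, ∃ y ∈ T, 1 - δ ≤ g (y - x) := by
  obtain ⟨s, hs, norming⟩ := exists_finset_strongDual_norming E (half_pos hδ0)
  refine ⟨s, hs, fun T hT ↦ ?_⟩
  obtain ⟨y, hy, x, hx, hyx⟩ : ∃ y ∈ T, ∃ x ∈ T, 1 - δ / 2 < dist y x :=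
    exists_lt_dist_of_lt_diam (by linarith) (by linarith)
  obtain ⟨g, hg, hgw⟩ := norming (y - x)
  refine ⟨g, hg, x, hx, y, hy, ?_⟩
  calc 1 - δ ≤ (1 - δ / 2) * (1 - δ / 2) := by linarith [sq_nonneg (δ / 2)]
    _ ≤ (1 - δ / 2) * ‖y - x‖ := by
      rw [← dist_eq_norm]
      exact mul_le_mul_of_nonneg_left hyx.le (by linarith)
    _ ≤ g (y - x) := hgw

variable (E) in
theorem tverberg_for_diameter_general {m : ℕ} (hm : 0 < m) {δ : ℝ} (hδ0 : 0 < δ) (hδ1 : δ < 1) :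
    ∃ n : ℕ, 0 < n ∧ ∀ T : Fin n → Set E, (∀ j, 1 ≤ Metric.diam (T j)) →
      ∃ f : Fin n → Fin m,
        1 - δ ≤ Metric.diam (⋂ i : Fin m, convexHull ℝ (⋃ j ∈ {j : Fin n | f j = i}, T j)) := by
  classical
  obtain ⟨k, rfl⟩ := Nat.exists_eq_add_one_of_ne_zero hm.ne'
  obtain ⟨s, hs, separating⟩ := exists_finset_strongDual_separating E hδ0 hδ1
  let N := (finrank ℝ (E × E) + 1) * (k * (finrank ℝ (E × E) + 1))
  refine ⟨#s * N + 1, Nat.succ_pos _, fun T hT ↦ ?_⟩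
  choose G hGs x hx y hy hxy using fun j ↦ separating (T j) (hT j)
  obtain ⟨g, hg, hN⟩ : ∃ g ∈ s, N < #{j | G j = g} :=
    exists_lt_card_fiber_of_mul_lt_card_of_maps_to (fun j _ ↦ hGs j) (by simp)
  obtain ⟨f, p, q, hpq, hmem⟩ := exists_coloring_forall_mem_convexHull_pair (x := x) (y := y)
    (g : E →ₗ[ℝ] ℝ) (fun j hj ↦ (mem_filter.1 hj).2 ▸ hxy j) hN
  have image_subset {z : Fin (#s * N + 1) → E} (hz : ∀ j, z j ∈ T j) (i : Fin (k + 1)) :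
      z '' (({j | G j = g} : Finset _) ∩ f ⁻¹' {i}) ⊆ ⋃ j ∈ {j | f j = i}, T j :=
    Set.image_subset_iff.2 fun j hj ↦ Set.mem_biUnion hj.2 (hz j)
  have hT_bdd j : Bornology.IsBounded (T j) := isBounded_of_diam_pos (one_pos.trans_le (hT j))
  refine ⟨f, le_diam_of_le_apply_sub (hs g hg) (isBounded_iInter_convexHull hT_bdd _) ?_ ?_ hpq⟩
  · exact Set.mem_iInter.2 fun i ↦ convexHull_mono (image_subset hx i) (hmem i).1
  · exact Set.mem_iInter.2 fun i ↦ convexHull_mono (image_subset hy i) (hmem i).2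

end Normed

/-- **Tverberg's theorem for the diameter.**  For positive integers `d`, `m` and `0 < δ < 1`,
there is `n = n(d, m, δ)` such that: given any `n` sets in `ℝ^d`, each of diameter at least
one, they can be partitioned into `m` parts `A₁, …, A_m` so that the intersection
`⋂ᵢ conv(∪ Aᵢ)` has diameter at least `1 - δ`. -/
theorem tverberg_for_diameter (d m : ℕ) (hd : 0 < d) (hm : 0 < m)
    (δ : ℝ) (hδ0 : 0 < δ) (hδ1 : δ < 1) :
    ∃ n : ℕ, 0 < n ∧
      ∀ T : Fin n → Set (EuclideanSpace ℝ (Fin d)),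
        (∀ j, 1 ≤ Metric.diam (T j)) →
        ∃ f : Fin n → Fin m,
          1 - δ ≤ Metric.diam
            (⋂ i : Fin m, convexHull ℝ (⋃ j ∈ {j : Fin n | f j = i}, T j)) :=
  tverberg_for_diameter_general _ hm hδ0 hδ1
end

section
/- Let d be a positive integer and 0 < δ < 1. There is a constant λ = λ(δ,d) > 0 such that: for any finite family 𝓕 of compact sets in ℝ^d, each of diameter at least one, with |𝓕| ≥ 2d, there is a convex set K of diameter at least 1 − δ such that K ⊆ conv(∪A) for at least λ·C(|𝓕|,2d) subsets A ⊆ 𝓕 of cardinality 2d. -/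
/-!
Replace each set by a pair of points `x`, `y` almost as far apart as its diameter. A finite net of
norm-one functionals and the pigeonhole principle single out one functional `f` for which a positive
proportion of the pairs satisfy `c ≤ f (y - x)`; sliding `y` towards `x` makes this an equality.
The pairs then lie on the hyperplane `f (y - x) = c` of `E × E`, which has dimension `2d - 1`, so
the first selection lemma there gives a pair `(a, b)` in the convex hull of a positive proportion of
the `2d`-subsets of the pairs. As `f (b - a) = c`, the segment `[a, b]` is long enough.

For the first selection lemma, a centerpoint lies in the hulls of many disjoint simplices, and
colorful Carathéodory turns any `dim + 1` of them into a rainbow simplex containing it.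
-/

open scoped Finset

section ColorfulCaratheodory

variable {E κ : Type*} [Fintype κ]

theorem exists_mem_convexHull_image_compl_singleton [AddCommGroup E] [Module ℝ E]
    [FiniteDimensional ℝ E] (hκ : Module.finrank ℝ E < Fintype.card κ) {ℓ : Module.Dual ℝ E}
    (hℓ : ℓ ≠ 0) {v : κ → E} {q : E} (hq : q ∈ convexHull ℝ (Set.range v))
    (hv : ∀ k, ℓ (v k) ≤ ℓ q) :
    ∃ k, q ∈ convexHull ℝ (v '' {k}ᶜ) := by
  obtain ⟨σ, _, y, w, hyv, hy, hw, hw1, hwq⟩ := eq_pos_convex_span_of_mem_convexHull hq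
  choose g hg using fun i => hyv (Set.mem_range_self i)
  have hface : ∀ i, ℓ (y i) = ℓ q := by
    have hterm : ∀ i ∈ Finset.univ, w i * ℓ (y i) ≤ w i * ℓ q := fun i _ =>
      mul_le_mul_of_nonneg_left (hg i ▸ hv (g i)) (hw i).le
    have hsum : ∑ i, w i * ℓ (y i) = ∑ i, w i * ℓ q := by
      rw [← Finset.sum_mul, hw1, one_mul, ← hwq, map_sum]
      simp only [map_smul, smul_eq_mul]
    exact fun i => mul_left_cancel₀ (hw i).ne'
      ((Finset.sum_eq_sum_iff_of_le hterm).1 hsum i (Finset.mem_univ i))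
  have hspan : vectorSpan ℝ (Set.range y) ≤ LinearMap.ker ℓ := by
    rw [vectorSpan_def, Submodule.span_le]
    rintro _ ⟨_, ⟨i, rfl⟩, _, ⟨j, rfl⟩, rfl⟩
    simp [hface]
  have hσ : Fintype.card σ < Fintype.card κ := calc
    Fintype.card σ ≤ Module.finrank ℝ (vectorSpan ℝ (Set.range y)) + 1 := hy.card_le_finrank_succ
    _ ≤ Module.finrank ℝ (LinearMap.ker ℓ) + 1 := by gcongr; exact Submodule.finrank_mono hspan
    _ = Module.finrank ℝ E := Module.Dual.finrank_ker_add_one_of_ne_zero hℓ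
    _ < Fintype.card κ := hκ
  obtain ⟨k, hk⟩ : ∃ k, ∀ i, g i ≠ k := by
    simpa [Function.Surjective] using mt (Fintype.card_le_of_surjective g) hσ.not_ge
  exact ⟨k, mem_convexHull_of_exists_fintype w y (fun i => (hw i).le) hw1
    (fun i => ⟨g i, hk i, hg i⟩) hwq⟩

theorem dist_eq_infDist_iff_inner_sub_nonpos [NormedAddCommGroup E] [InnerProductSpace ℝ E]
    {C : Set E} (hC : Convex ℝ C) {p q : E} (hq : q ∈ C) :
    dist p q = Metric.infDist p C ↔ ∀ w ∈ C, inner ℝ (p - q) (w - q) ≤ 0 := by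
  rw [← norm_eq_iInf_iff_real_inner_le_zero hC hq, Metric.infDist_eq_iInf]
  simp only [dist_eq_norm]

theorem exists_infDist_convexHull_update_lt [NormedAddCommGroup E] [InnerProductSpace ℝ E]
    [FiniteDimensional ℝ E] [DecidableEq κ] (hκ : Module.finrank ℝ E < Fintype.card κ)
    {S : κ → Set E} {p : E} (hp : ∀ k, p ∈ convexHull ℝ (S k)) {v : κ → E}
    (hpv : p ∉ convexHull ℝ (Set.range v)) :
    ∃ k, ∃ b ∈ S k, Metric.infDist p (convexHull ℝ (Set.range (Function.update v k b))) <
      Metric.infDist p (convexHull ℝ (Set.range v)) := by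
  have : Nonempty κ := Fintype.card_pos_iff.1 (Nat.zero_lt_of_lt hκ)
  have hcompact := (Set.finite_range v).isCompact_convexHull (𝕜 := ℝ)
  obtain ⟨q, hq, hpq⟩ := hcompact.exists_infDist_eq_dist (Set.range_nonempty v).convexHull p
  have hpq0 : p - q ≠ 0 := sub_ne_zero.2 fun h => hpv (h ▸ hq)
  have hnormal := (dist_eq_infDist_iff_inner_sub_nonpos (convex_convexHull ℝ _) hq).1 hpq.symm
  have hself : 0 < inner ℝ (p - q) (p - q) := real_inner_self_pos.2 hpq0
  obtain ⟨k, hk⟩ := exists_mem_convexHull_image_compl_singleton hκ (ℓ := innerₛₗ ℝ (p - q))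
    (fun h => hself.ne' (LinearMap.congr_fun h (p - q))) hq fun k => by
      have := hnormal _ (subset_convexHull ℝ _ (Set.mem_range_self k))
      rwa [inner_sub_right, sub_nonpos] at this
  obtain ⟨b, hb, hbp⟩ := ((innerₛₗ ℝ (p - q)).convexOn convex_univ).exists_ge_of_mem_convexHull
    (Set.subset_univ _) (hp k)
  have hq' : q ∈ convexHull ℝ (Set.range (Function.update v k b)) := by
    refine convexHull_mono ?_ hk
    rintro _ ⟨j, hj, rfl⟩
    exact ⟨j, Function.update_of_ne hj b v⟩
  have hbq : 0 < inner ℝ (p - q) (b - q) := by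
    simp only [innerₛₗ_apply_apply] at hbp
    rw [inner_sub_right] at hself ⊢
    linarith
  refine ⟨k, b, hb, hpq ▸ lt_of_le_of_ne (Metric.infDist_le_dist_of_mem hq') fun h => ?_⟩
  exact hbq.not_ge ((dist_eq_infDist_iff_inner_sub_nonpos (convex_convexHull ℝ _) hq').1 h.symm b
    (subset_convexHull ℝ _ ⟨k, Function.update_self k b v⟩))

theorem colorful_caratheodory_finset [NormedAddCommGroup E] [InnerProductSpace ℝ E]
    [FiniteDimensional ℝ E] (hκ : Module.finrank ℝ E < Fintype.card κ)
    {B : κ → Finset E} {p : E} (hp : ∀ k, p ∈ convexHull ℝ (B k : Set E)) :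
    ∃ v : κ → E, (∀ k, v k ∈ B k) ∧ p ∈ convexHull ℝ (Set.range v) := by
  classical
  have hne : (Fintype.piFinset B).Nonempty := Fintype.piFinset_nonempty.2 fun k =>
    Finset.coe_nonempty.1 (convexHull_nonempty_iff.1 ⟨p, hp k⟩)
  obtain ⟨v, hv, hmin⟩ := Finset.exists_min_image _
    (fun v => Metric.infDist p (convexHull ℝ (Set.range v))) hne
  refine ⟨v, Fintype.mem_piFinset.1 hv, ?_⟩
  by_contra hpv
  obtain ⟨k, b, hb, hlt⟩ := exists_infDist_convexHull_update_lt hκ hp hpv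
  refine (hmin _ (Fintype.mem_piFinset.2 fun j => ?_)).not_gt hlt
  obtain rfl | hj := eq_or_ne j k
  · simpa using hb
  · simpa [hj] using Fintype.mem_piFinset.1 hv j

theorem colorful_caratheodory [AddCommGroup E] [Module ℝ E]
    [FiniteDimensional ℝ E] (hκ : Module.finrank ℝ E < Fintype.card κ)
    {S : κ → Set E} {p : E} (hp : ∀ k, p ∈ convexHull ℝ (S k)) :
    ∃ v : κ → E, (∀ k, v k ∈ S k) ∧ p ∈ convexHull ℝ (Set.range v) := by
  classical
  let φ : E ≃ₗ[ℝ] EuclideanSpace ℝ (Fin (Module.finrank ℝ E)) :=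
    LinearEquiv.ofFinrankEq _ _ finrank_euclideanSpace_fin.symm
  have hfin : ∀ k, ∃ B : Finset E, ↑B ⊆ S k ∧ p ∈ convexHull ℝ (B : Set E) := fun k => by
    simpa [convexHull_eq_union_convexHull_finite_subsets (S k)] using hp k
  choose B hBS hB using hfin
  obtain ⟨v, hvB, hv⟩ := colorful_caratheodory_finset (by simpa using hκ) (p := φ p)
    (B := fun k => (B k).image φ) fun k => by
      rw [Finset.coe_image]
      exact φ.toLinearMap.image_convexHull (B k) ▸ Set.mem_image_of_mem φ (hB k)
  refine ⟨φ.symm ∘ v, fun k => ?_, ?_⟩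
  · obtain ⟨b, hb, hbv⟩ := Finset.mem_image.1 (hvB k)
    simpa [← hbv] using hBS k hb
  · rw [Set.range_comp]
    exact φ.symm.toLinearMap.image_convexHull (Set.range v) ▸ ⟨φ p, hv, φ.symm_apply_apply p⟩

end ColorfulCaratheodory

section HullDepth

variable {ι E : Type*} [AddCommGroup E] [Module ℝ E] {A B : ι → Set E} {n : ℕ} {s t : Finset ι}
  {K : Set E}

/-- The depth of `K` in a finite family of sets `A i`, `i ∈ s`: the number of `n`-element
subfamilies such that `K` lies in the convex hull of their union. Sets are indexed so that
repetitions count. -/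
noncomputable def hullDepth (A : ι → Set E) (n : ℕ) (s : Finset ι) (K : Set E) : ℕ :=
  open scoped Classical in
  #{T ∈ s.powersetCard n | K ⊆ convexHull ℝ (⋃ i ∈ T, A i)}

theorem hullDepth_mono_index (h : s ⊆ t) : hullDepth A n s K ≤ hullDepth A n t K := by
  classical
  exact Finset.card_le_card (Finset.filter_subset_filter _ (Finset.powersetCard_mono h))

theorem hullDepth_mono (h : ∀ i ∈ s, A i ⊆ convexHull ℝ (B i)) :
    hullDepth A n s K ≤ hullDepth B n s K := by
  classical
  refine Finset.card_le_card (Finset.monotone_filter_right _ fun T hT hK => hK.trans ?_)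
  refine convexHull_min (Set.iUnion₂_subset fun i hi => ?_) (convex_convexHull ℝ _)
  exact (h i ((Finset.mem_powersetCard.1 hT).1 hi)).trans
    (convexHull_mono (Set.subset_biUnion_of_mem (u := B) hi))

theorem hullDepth_pos (hn : 0 < n) (hns : n ≤ #s) {i : ι} (hi : i ∈ s)
    (hK : K ⊆ convexHull ℝ (A i)) : 0 < hullDepth A n s K := by
  classical
  obtain ⟨T, hiT, hTs, hT⟩ := Finset.exists_subsuperset_card_eq
    (Finset.singleton_subset_iff.2 hi) ((Finset.card_singleton i).trans_le hn) hns
  refine Finset.card_pos.2 ⟨T, Finset.mem_filter.2 ⟨Finset.mem_powersetCard.2 ⟨hTs, hT⟩, ?_⟩⟩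
  exact hK.trans (convexHull_mono
    (Set.subset_biUnion_of_mem (u := A) (Finset.singleton_subset_iff.1 hiT)))

theorem hullDepth_id (F : Finset (Set E)) : hullDepth id n F K =
    {T : Finset (Set E) | T ⊆ F ∧ #T = n ∧ K ⊆ convexHull ℝ (⋃₀ (T : Set (Set E)))}.ncard := by
  rw [hullDepth, ← Set.ncard_coe_finset]
  congr 1
  ext T
  simp [and_assoc, Set.sUnion_eq_biUnion]

end HullDepth

section FirstSelection

variable {ι : Type*}

theorem exists_mem_forall_mem_of_sum_card_sdiff_lt [DecidableEq ι] {s : Finset ι}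
    {I : Finset (Finset ι)} (h : ∑ t ∈ I, #(s \ t) < #s) : ∃ x ∈ s, ∀ t ∈ I, x ∈ t := by
  by_contra! hcon
  have hcover : s ⊆ I.biUnion (s \ ·) := fun x hx => by
    obtain ⟨t, ht, hxt⟩ := hcon x hx
    exact Finset.mem_biUnion.2 ⟨t, ht, Finset.mem_sdiff.2 ⟨hx, hxt⟩⟩
  exact h.not_ge ((Finset.card_le_card hcover).trans Finset.card_biUnion_le)

theorem exists_pairwiseDisjoint_card_eq {s : Finset ι} {P : Finset ι → Prop}
    {k r : ℕ} (hk : 0 < k)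
    (h : ∀ t ⊆ s, #s < #t + k * r → ∃ b ⊆ t, b.Nonempty ∧ #b ≤ k ∧ P b) :
    ∃ Q : Finset (Finset ι), #Q = r ∧ (Q : Set (Finset ι)).PairwiseDisjoint id ∧
      ∀ b ∈ Q, b ⊆ s ∧ #b ≤ k ∧ P b := by
  classical
  induction r with
  | zero => exact ⟨∅, by simp⟩
  | succ r ih =>
    obtain ⟨Q, rfl, hQd, hQ⟩ := ih fun t hts ht => h t hts (by rw [mul_add]; omega)
    have hunion : #(Q.biUnion id) ≤ #Q * k :=
      Finset.card_biUnion_le_card_mul _ _ _ fun b hb => (hQ b hb).2.1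
    have hrest := Finset.le_card_sdiff (Q.biUnion id) s
    obtain ⟨b, hbt, hne, hbk, hbP⟩ := h (s \ Q.biUnion id) Finset.sdiff_subset
      (by rw [mul_add, mul_comm k]; omega)
    have hdisj : ∀ c ∈ Q, Disjoint b c := fun c hc =>
      Finset.disjoint_of_subset_left hbt (Finset.sdiff_disjoint.mono_right
        (Finset.subset_biUnion_of_mem id hc))
    have hbQ : b ∉ Q := fun hb => hne.ne_empty (disjoint_self.1 (hdisj b hb))
    refine ⟨insert b Q, Finset.card_insert_of_notMem hbQ, ?_, ?_⟩
    · rw [Finset.coe_insert]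
      exact hQd.insert fun c hc _ => hdisj c hc
    · exact Finset.forall_mem_insert _ _ _ |>.2 ⟨⟨hbt.trans Finset.sdiff_subset, hbk, hbP⟩, hQ⟩

variable {E : Type*} [AddCommGroup E] [Module ℝ E]

/-- The simplicial depth of `p` in a finite family of points `z i`, `i ∈ s`: the number of
`(dim E + 1)`-element subfamilies whose convex hull contains `p`. Points are indexed so that
repetitions count. -/
noncomputable def simplicialDepth (z : ι → E) (s : Finset ι) (p : E) : ℕ :=
  open scoped Classical in
  #{T ∈ s.powersetCard (Module.finrank ℝ E + 1) | p ∈ convexHull ℝ (z '' (T : Finset ι))}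

theorem simplicialDepth_le_hullDepth_segment {V : Type*} [AddCommGroup V] [Module ℝ V]
    (α β : V →ᵃ[ℝ] E) (z : ι → V) (s : Finset ι) (p : V) :
    simplicialDepth z s p ≤ hullDepth (fun i => {α (z i), β (z i)})
      (Module.finrank ℝ V + 1) s (segment ℝ (α p) (β p)) := by
  classical
  refine Finset.card_le_card (Finset.monotone_filter_right _ fun T _ hp => ?_)
  have hmem : ∀ γ : V →ᵃ[ℝ] E, (∀ i, γ (z i) ∈ ({α (z i), β (z i)} : Set E)) →
      γ p ∈ convexHull ℝ (⋃ i ∈ T, {α (z i), β (z i)}) := fun γ hγ => by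
    refine convexHull_mono ?_ (γ.image_convexHull (z '' T) ▸ Set.mem_image_of_mem γ hp)
    rintro _ ⟨_, ⟨i, hi, rfl⟩, rfl⟩
    exact Set.mem_biUnion hi (hγ i)
  exact (convex_convexHull ℝ _).segment_subset (hmem α fun i => Set.mem_insert _ _)
    (hmem β fun i => Set.mem_insert_of_mem _ rfl)

variable [FiniteDimensional ℝ E]

theorem caratheodory_image (z : ι → E) {t : Finset ι} {p : E}
    (hp : p ∈ convexHull ℝ (z '' t)) :
    ∃ b ⊆ t, #b ≤ Module.finrank ℝ E + 1 ∧ p ∈ convexHull ℝ (z '' b) := by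
  classical
  rw [convexHull_eq_union] at hp
  simp only [Set.mem_iUnion] at hp
  obtain ⟨u, hut, hu, hpu⟩ := hp
  obtain ⟨b, hbt, hinj, rfl⟩ := Finset.exists_subset_injOn_image_eq_of_surjOn (t : Set ι) u hut
  refine ⟨b, by exact_mod_cast hbt, ?_, by simpa using hpu⟩
  calc #b = Fintype.card (b.image z) := by simp [Finset.card_image_of_injOn hinj]
    _ ≤ Module.finrank ℝ (vectorSpan ℝ (Set.range ((↑) : b.image z → E))) + 1 :=
        hu.card_le_finrank_succ
    _ ≤ Module.finrank ℝ E + 1 := by gcongr; exact Submodule.finrank_le _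

theorem exists_centerpoint (z : ι → E) (s : Finset ι) :
    ∃ p : E, ∀ t ⊆ s, Module.finrank ℝ E * #s < (Module.finrank ℝ E + 1) * #t →
      p ∈ convexHull ℝ (z '' t) := by
  classical
  set D := Module.finrank ℝ E
  let large := {t ∈ s.powerset | D * #s < (D + 1) * #t}
  have hlarge : ∀ {t}, t ∈ large ↔ t ⊆ s ∧ D * #s < (D + 1) * #t := by simp [large]
  have hhelly : (⋂ t ∈ large, convexHull ℝ (z '' (t : Set ι))).Nonempty := by
    refine Convex.helly_theorem' (fun _ _ => convex_convexHull ℝ _) fun I hI hIcard => ?_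
    obtain rfl | hne := I.eq_empty_or_nonempty
    · simp
    have hsum : ∑ t ∈ I, #(s \ t) < #s := by
      have hterm : ∀ t ∈ I, (D + 1) * #(s \ t) < #s := fun t ht => by
        obtain ⟨hts, ht⟩ := hlarge.1 (hI ht)
        have := Finset.card_sdiff_add_card_eq_card hts
        nlinarith
      refine Nat.lt_of_mul_lt_mul_left (a := D + 1) ?_
      calc (D + 1) * ∑ t ∈ I, #(s \ t) < #I * #s := by
            rw [Finset.mul_sum, ← smul_eq_mul (#I), ← Finset.sum_const]
            exact Finset.sum_lt_sum_of_nonempty hne hterm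
        _ ≤ (D + 1) * #s := by gcongr
    obtain ⟨x, -, hx⟩ := exists_mem_forall_mem_of_sum_card_sdiff_lt hsum
    exact ⟨z x, Set.mem_iInter₂.2 fun t ht => subset_convexHull ℝ _ ⟨x, hx t ht, rfl⟩⟩
  obtain ⟨p, hp⟩ := hhelly
  exact ⟨p, fun t hts ht => Set.mem_iInter₂.1 hp t (hlarge.2 ⟨hts, ht⟩)⟩

theorem exists_disjoint_simplices (z : ι → E) {s : Finset ι} {r : ℕ}
    (hr : (Module.finrank ℝ E + 1) ^ 2 * r ≤ #s) :
    ∃ (p : E) (Q : Finset (Finset ι)), #Q = r ∧ (Q : Set (Finset ι)).PairwiseDisjoint id ∧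
      ∀ b ∈ Q, b ⊆ s ∧ p ∈ convexHull ℝ (z '' b) := by
  obtain ⟨p, hp⟩ := exists_centerpoint z s
  obtain ⟨Q, hQr, hQd, hQ⟩ := exists_pairwiseDisjoint_card_eq (s := s) (r := r)
    (P := fun b => p ∈ convexHull ℝ (z '' b)) (Module.finrank ℝ E).succ_pos fun t hts ht => by
      obtain ⟨b, hbt, hb, hpb⟩ := caratheodory_image z (hp t hts (by nlinarith))
      have hne : (z '' (b : Set ι)).Nonempty := convexHull_nonempty_iff.1 ⟨p, hpb⟩
      exact ⟨b, hbt, by simpa using hne, hb, hpb⟩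
  exact ⟨p, Q, hQr, hQd, fun b hb => ⟨(hQ b hb).1, (hQ b hb).2.2⟩⟩

theorem exists_rainbow_simplex [DecidableEq ι] (z : ι → E) {J : Finset (Finset ι)} {p : E}
    (hJ : #J = Module.finrank ℝ E + 1) (hd : (J : Set (Finset ι)).PairwiseDisjoint id)
    (hp : ∀ b ∈ J, p ∈ convexHull ℝ (z '' b)) :
    ∃ T ⊆ J.biUnion id, #T = Module.finrank ℝ E + 1 ∧ p ∈ convexHull ℝ (z '' T) ∧
      ∀ b ∈ J, ¬ Disjoint b T := by
  obtain ⟨v, hv, hpv⟩ := colorful_caratheodory (κ := J) (by simp [hJ]) fun b => hp b b.2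
  choose g hg hgv using hv
  obtain rfl : z ∘ g = v := funext hgv
  have hinj : Function.Injective g := fun b c hbc =>
    Subtype.ext (hd.elim_finset b.2 c.2 (g b) (hg b) (hbc ▸ hg c))
  refine ⟨Finset.univ.image g, ?_, ?_, ?_, fun b hb => ?_⟩
  · exact Finset.image_subset_iff.2 fun b _ => Finset.mem_biUnion.2 ⟨b, b.2, hg b⟩
  · simp [Finset.card_image_of_injective _ hinj, hJ]
  · simpa [Set.range_comp] using hpv
  · exact Finset.not_disjoint_iff.2 ⟨g ⟨b, hb⟩, hg _, Finset.mem_image_of_mem g (Finset.mem_univ _)⟩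

theorem choose_card_le_simplicialDepth (z : ι → E) {s : Finset ι} {Q : Finset (Finset ι)} {p : E}
    (hd : (Q : Set (Finset ι)).PairwiseDisjoint id)
    (hQ : ∀ b ∈ Q, b ⊆ s ∧ p ∈ convexHull ℝ (z '' b)) :
    (#Q).choose (Module.finrank ℝ E + 1) ≤ simplicialDepth z s p := by
  classical
  rw [← Finset.card_powersetCard, simplicialDepth]
  -- A rainbow simplex remembers its colours: they are the members of `Q` it meets.
  refine Finset.card_le_card_of_surjOn (fun T : Finset ι => {b ∈ Q | ¬ Disjoint b T}) fun J hJ => ?_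
  obtain ⟨hJQ, hJ⟩ := Finset.mem_powersetCard.1 hJ
  obtain ⟨T, hTJ, hT, hpT, hmeet⟩ := exists_rainbow_simplex z hJ (hd.subset hJQ)
    fun b hb => (hQ b (hJQ hb)).2
  have hTs : T ⊆ s := hTJ.trans (Finset.biUnion_subset.2 fun b hb => (hQ b (hJQ hb)).1)
  refine ⟨T, by simp [hTs, hT, hpT], Finset.Subset.antisymm (fun b hb => ?_) fun b hb =>
    Finset.mem_filter.2 ⟨hJQ hb, hmeet b hb⟩⟩
  obtain ⟨hbQ, hbT⟩ := Finset.mem_filter.1 hb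
  obtain ⟨i, hib, hiT⟩ := Finset.not_disjoint_iff.1 hbT
  obtain ⟨c, hcJ, hic⟩ := Finset.mem_biUnion.1 (hTJ hiT)
  exact hd.elim_finset hbQ (hJQ hcJ) i hib hic ▸ hcJ

theorem first_selection_lemma (z : ι → E) {s : Finset ι} {r : ℕ}
    (hr : (Module.finrank ℝ E + 1) ^ 2 * r ≤ #s) :
    ∃ p : E, r.choose (Module.finrank ℝ E + 1) ≤ simplicialDepth z s p := by
  obtain ⟨p, Q, rfl, hd, hQ⟩ := exists_disjoint_simplices z hr
  exact ⟨p, choose_card_le_simplicialDepth z hd hQ⟩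

theorem first_selection_lemma_pairs {f : Module.Dual ℝ E} (hf : f ≠ 0) {c : ℝ} {x y : ι → E}
    {s : Finset ι} (hxy : ∀ i ∈ s, f (y i - x i) = c) {r : ℕ}
    (hr : (2 * Module.finrank ℝ E) ^ 2 * r ≤ #s) :
    ∃ a b : E, f (b - a) = c ∧ r.choose (2 * Module.finrank ℝ E) ≤
      hullDepth (fun i => {x i, y i}) (2 * Module.finrank ℝ E) s (segment ℝ a b) := by
  obtain ⟨u, hu⟩ := f.surjective hf c
  have hdim : Module.finrank ℝ (E × LinearMap.ker f) + 1 = 2 * Module.finrank ℝ E := by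
    rw [Module.finrank_prod, add_assoc, Module.Dual.finrank_ker_add_one_of_ne_zero hf, two_mul]
  -- `(v, w) ↦ (v, v + w + u)` parametrizes the pairs `(a, b)` with `f (b - a) = c`.
  let α : E × LinearMap.ker f →ᵃ[ℝ] E := (LinearMap.fst ℝ E _).toAffineMap
  let β : E × LinearMap.ker f →ᵃ[ℝ] E :=
    (LinearMap.fst ℝ E _ + (LinearMap.ker f).subtype ∘ₗ LinearMap.snd ℝ E _).toAffineMap +
      AffineMap.const ℝ _ u
  have hαβ : ∀ p, f (β p - α p) = c := fun p => by simp [α, β, hu]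
  have hlift : ∀ i ∈ s, ∃ p, α p = x i ∧ β p = y i := fun i hi => by
    have hker : y i - x i - u ∈ LinearMap.ker f := by simp [map_sub f _ u, hxy i hi, hu]
    refine ⟨(x i, ⟨_, hker⟩), rfl, ?_⟩
    change x i + (y i - x i - u) + u = y i
    abel
  choose! z hαz hβz using hlift
  obtain ⟨p, hp⟩ := first_selection_lemma z (s := s) (r := r) (by rwa [hdim])
  refine ⟨α p, β p, hαβ p, ?_⟩
  rw [← hdim]
  refine (hp.trans (simplicialDepth_le_hullDepth_segment α β z s p)).trans
    (hullDepth_mono fun i hi => ?_)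
  rw [hαz i hi, hβz i hi]
  exact subset_convexHull ℝ _

end FirstSelection

theorem choose_le_pow_mul_max_choose_div (N n : ℕ) {q : ℕ} (hq : 0 < q) :
    N.choose n ≤ (2 * q * n) ^ n * max 1 ((N / q).choose n) := by
  obtain rfl | hn := n.eq_zero_or_pos
  · simp
  have hN : N < q * (N / q + 1) := Nat.lt_mul_div_succ N hq
  generalize N / q = r at hN ⊢
  obtain hr | hr := lt_or_ge r n
  · calc N.choose n ≤ N ^ n := Nat.choose_le_pow N n
      _ ≤ (2 * q * n) ^ n := by gcongr; nlinarith
      _ ≤ (2 * q * n) ^ n * max 1 (r.choose n) := Nat.le_mul_of_pos_right _ (by simp)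
  · have hNr : N ≤ 2 * q * n * (r + 1 - n) := by
      obtain ⟨k, rfl⟩ := Nat.exists_eq_add_of_le hr
      rw [show n + k + 1 - n = k + 1 by omega]
      have hk : n + k + 1 ≤ 2 * n * (k + 1) := by nlinarith
      calc N ≤ q * (n + k + 1) := hN.le
        _ ≤ q * (2 * n * (k + 1)) := by gcongr
        _ = 2 * q * n * (k + 1) := by ring
    refine Nat.le_of_mul_le_mul_left ?_ n.factorial_pos
    calc n.factorial * N.choose n = N.descFactorial n :=
          (Nat.descFactorial_eq_factorial_mul_choose N n).symm
      _ ≤ N ^ n := Nat.descFactorial_le_pow N n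
      _ ≤ (2 * q * n) ^ n * (r + 1 - n) ^ n := by rw [← mul_pow]; gcongr
      _ ≤ (2 * q * n) ^ n * r.descFactorial n := by gcongr; exact Nat.pow_sub_le_descFactorial r n
      _ = n.factorial * ((2 * q * n) ^ n * r.choose n) := by
          rw [Nat.descFactorial_eq_factorial_mul_choose, mul_left_comm]
      _ ≤ n.factorial * ((2 * q * n) ^ n * max 1 (r.choose n)) := by gcongr; exact le_max_right _ _

section NormedSpace

theorem exists_lt_dist_of_lt_ediam {X : Type*} [PseudoMetricSpace X] {A : Set X} {c : ℝ}
    (hc : ENNReal.ofReal c < Metric.ediam A) : ∃ x ∈ A, ∃ y ∈ A, c < dist x y := by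
  by_contra! h
  refine hc.not_ge (Metric.ediam_le fun x hx y hy => ?_)
  rw [edist_dist]
  exact ENNReal.ofReal_le_ofReal (h x hx y hy)

theorem exists_mem_segment_map_sub_eq {E : Type*} [AddCommGroup E] [Module ℝ E]
    (f : Module.Dual ℝ E) {x y : E} {c : ℝ} (hc : 0 ≤ c) (hcf : c ≤ f (y - x)) :
    ∃ v ∈ segment ℝ x y, f (v - x) = c := by
  have himage : f x + c ∈ f.toAffineMap '' segment ℝ x y := by
    rw [map_sub] at hcf
    rw [image_segment, LinearMap.coe_toAffineMap, segment_eq_Icc (by linarith)]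
    constructor <;> linarith
  obtain ⟨v, hv, hfv⟩ := himage
  exact ⟨v, hv, by rw [map_sub, sub_eq_iff_eq_add']; exact hfv⟩

variable {E : Type*} [NormedAddCommGroup E] [NormedSpace ℝ E]

theorem dist_le_diam_segment (a b : E) : dist a b ≤ Metric.diam (segment ℝ a b) := by
  rw [← convexHull_pair, convexHull_diam]
  exact Metric.dist_le_diam_of_mem (Set.toFinite _).isBounded (by simp) (by simp)

variable [FiniteDimensional ℝ E]

theorem exists_choose_le_hullDepth_of_functional {ι : Type*} {f : StrongDual ℝ E} (hf : ‖f‖ = 1)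
    {c : ℝ} (hc : 0 ≤ c) {x y : ι → E} {s : Finset ι} (hxy : ∀ i ∈ s, c ≤ f (y i - x i)) {r : ℕ}
    (hr : (2 * Module.finrank ℝ E) ^ 2 * r ≤ #s) :
    ∃ a b : E, c ≤ dist a b ∧ r.choose (2 * Module.finrank ℝ E) ≤
      hullDepth (fun i => {x i, y i}) (2 * Module.finrank ℝ E) s (segment ℝ a b) := by
  have hf0 : f.toLinearMap ≠ 0 := fun h => by
    simp [ContinuousLinearMap.coe_injective (h.trans ContinuousLinearMap.toLinearMap_zero.symm)]
      at hf
  have hslide : ∀ i ∈ s, ∃ v ∈ segment ℝ (x i) (y i), f (v - x i) = c := fun i hi =>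
    exists_mem_segment_map_sub_eq f.toLinearMap hc (hxy i hi)
  choose! v hv hfv using hslide
  obtain ⟨a, b, hab, hcard⟩ := first_selection_lemma_pairs hf0 hfv hr
  refine ⟨a, b, ?_, hcard.trans (hullDepth_mono fun i hi => ?_)⟩
  · calc c = f (b - a) := hab.symm
      _ ≤ ‖f (b - a)‖ := Real.le_norm_self _
      _ ≤ ‖f‖ * ‖b - a‖ := f.le_opNorm _
      _ = dist a b := by rw [hf, one_mul, dist_eq_norm']
  · rw [convexHull_pair]
    exact Set.pair_subset (left_mem_segment ℝ _ _) (hv i hi)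

theorem exists_choose_le_hullDepth_of_functionals {ι : Type*} {t : Finset (StrongDual ℝ E)}
    (ht : ∀ f ∈ t, ‖f‖ = 1) (hne : t.Nonempty) {c : ℝ} (hc : 0 ≤ c) {x y : ι → E} {s : Finset ι}
    (hxy : ∀ i ∈ s, ∃ f ∈ t, c ≤ f (y i - x i)) {r : ℕ}
    (hr : #t * (2 * Module.finrank ℝ E) ^ 2 * r ≤ #s) :
    ∃ a b : E, c ≤ dist a b ∧ r.choose (2 * Module.finrank ℝ E) ≤
      hullDepth (fun i => {x i, y i}) (2 * Module.finrank ℝ E) s (segment ℝ a b) := by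
  classical
  choose! g hgt hg using hxy
  obtain ⟨f, hft, hfcard⟩ :=
    Finset.exists_le_card_fiber_of_mul_le_card_of_maps_to hgt hne (by rwa [← mul_assoc])
  obtain ⟨a, b, hab, hcard⟩ := exists_choose_le_hullDepth_of_functional (ht f hft) hc
    (fun i hi => (Finset.mem_filter.1 hi).2 ▸ hg i (Finset.mem_filter.1 hi).1) hfcard
  exact ⟨a, b, hab, hcard.trans (hullDepth_mono_index (Finset.filter_subset _ _))⟩

variable [Nontrivial E]

theorem exists_finset_strongDual_mul_norm_le {θ : ℝ} (hθ : θ < 1) :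
    ∃ t : Finset (StrongDual ℝ E), (∀ f ∈ t, ‖f‖ = 1) ∧ ∀ v, ∃ f ∈ t, θ * ‖v‖ ≤ f v := by
  obtain ⟨t, ht1, htfin, htcover⟩ :=
    (isCompact_sphere (0 : StrongDual ℝ E) 1).finite_cover_balls (sub_pos.2 hθ)
  lift t to Finset (StrongDual ℝ E) using htfin
  refine ⟨t, fun f hf => by simpa using ht1 hf, fun v => ?_⟩
  obtain ⟨g, hg1, hgv⟩ := exists_dual_vector' ℝ v
  obtain ⟨f, hf, hgf⟩ := Set.mem_iUnion₂.1 (htcover (show g ∈ Metric.sphere 0 1 by simpa using hg1))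
  refine ⟨f, hf, ?_⟩
  have hdiff : g v - f v ≤ (1 - θ) * ‖v‖ := calc
    (g - f) v ≤ ‖(g - f) v‖ := Real.le_norm_self _
    _ ≤ ‖g - f‖ * ‖v‖ := (g - f).le_opNorm v
    _ ≤ (1 - θ) * ‖v‖ := by gcongr; exact (mem_ball_iff_norm.1 hgf).le
  have : g v = ‖v‖ := by simpa using hgv
  linarith

theorem selection_lemma_for_pairs {c m : ℝ} (hc : 0 ≤ c) (hcm : c < m) :
    ∃ lam : ℝ, 0 < lam ∧ ∀ (ι : Type*) (s : Finset ι) (x y : ι → E),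
      2 * Module.finrank ℝ E ≤ #s → (∀ i ∈ s, m ≤ dist (x i) (y i)) →
      ∃ a b : E, c ≤ dist a b ∧ lam * (#s).choose (2 * Module.finrank ℝ E) ≤
        hullDepth (fun i => {x i, y i}) (2 * Module.finrank ℝ E) s (segment ℝ a b) := by
  have hm : 0 < m := hc.trans_lt hcm
  obtain ⟨t, ht, htnet⟩ := exists_finset_strongDual_mul_norm_le (E := E) ((div_lt_one hm).2 hcm)
  have hne : t.Nonempty := (htnet 0).imp fun _ h => h.1
  have hd : 0 < 2 * Module.finrank ℝ E := by have := Module.finrank_pos (R := ℝ) (M := E); omega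
  set n := 2 * Module.finrank ℝ E
  set q := #t * n ^ 2
  have hq : 0 < q := Nat.mul_pos hne.card_pos (pow_pos hd 2)
  refine ⟨((2 * q * n) ^ n : ℝ)⁻¹, by positivity, fun ι s x y hs hxy => ?_⟩
  suffices ∃ a b : E, c ≤ dist a b ∧ max 1 ((#s / q).choose n) ≤
      hullDepth (fun i => {x i, y i}) n s (segment ℝ a b) by
    obtain ⟨a, b, hab, hdepth⟩ := this
    refine ⟨a, b, hab, (inv_mul_le_iff₀ (by positivity)).2 ?_⟩
    exact_mod_cast (choose_le_pow_mul_max_choose_div (#s) n hq).trans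
      (Nat.mul_le_mul_left _ hdepth)
  obtain h | h := le_total ((#s / q).choose n) 1
  · obtain ⟨i, hi⟩ := Finset.card_pos.1 (hd.trans_le hs)
    rw [max_eq_left h]
    exact ⟨x i, y i, hcm.le.trans (hxy i hi), hullDepth_pos hd hs hi (convexHull_pair _ _).ge⟩
  · rw [max_eq_right h]
    refine exists_choose_le_hullDepth_of_functionals ht hne hc (fun i hi => ?_) (Nat.mul_div_le _ _)
    obtain ⟨f, hf, hfxy⟩ := htnet (y i - x i)
    refine ⟨f, hf, le_trans ?_ hfxy⟩
    calc c = c / m * m := (div_mul_cancel₀ c hm.ne').symm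
      _ ≤ c / m * ‖y i - x i‖ := by rw [← dist_eq_norm']; gcongr; exact hxy i hi

theorem selection_lemma_for_diameter_general {c : ℝ} (hc : c < 1) :
    ∃ lam : ℝ, 0 < lam ∧ ∀ (ι : Type*) (s : Finset ι) (A : ι → Set E),
      2 * Module.finrank ℝ E ≤ #s → (∀ i ∈ s, 1 ≤ Metric.ediam (A i)) →
      ∃ a b : E, c ≤ dist a b ∧ lam * (#s).choose (2 * Module.finrank ℝ E) ≤
        hullDepth A (2 * Module.finrank ℝ E) s (segment ℝ a b) := by
  obtain ⟨m, hcm, hm⟩ := exists_between (max_lt hc one_pos)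
  obtain ⟨lam, hlam, hpairs⟩ := selection_lemma_for_pairs (E := E) (le_max_right c 0) hcm
  refine ⟨lam, hlam, fun ι s A hs hA => ?_⟩
  have hends : ∀ i ∈ s, ∃ x y, x ∈ A i ∧ y ∈ A i ∧ m < dist x y := fun i hi => by
    obtain ⟨x, hx, y, hy, hxy⟩ :=
      exists_lt_dist_of_lt_ediam ((ENNReal.ofReal_lt_one.2 hm).trans_le (hA i hi))
    exact ⟨x, y, hx, hy, hxy⟩
  choose! x y hx hy hxy using hends
  obtain ⟨a, b, hab, hdepth⟩ := hpairs ι s x y hs fun i hi => (hxy i hi).le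
  refine ⟨a, b, (le_max_left c 0).trans hab, hdepth.trans (Nat.cast_le.2 (hullDepth_mono ?_))⟩
  exact fun i hi => (Set.pair_subset (hx i hi) (hy i hi)).trans (subset_convexHull ℝ _)

end NormedSpace

/-- **Selection lemma for the diameter.**  For a positive integer `d` and `0 < δ < 1`, there is
`λ = λ(δ, d) > 0` such that: for any finite family `𝓕` of at least `2d` compact sets in `ℝ^d`,
each of diameter at least one, there is a convex set `K` of diameter at least `1 - δ` with
`K ⊆ conv(∪ A)` for at least `λ · C(|𝓕|, 2d)` subsets `A ⊆ 𝓕` of cardinality `2d`. -/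
theorem selection_lemma_for_diameter (d : ℕ) (hd : 0 < d)
    (δ : ℝ) (hδ0 : 0 < δ) (hδ1 : δ < 1) :
    ∃ lam : ℝ, 0 < lam ∧
      ∀ F : Finset (Set (EuclideanSpace ℝ (Fin d))),
        2 * d ≤ F.card →
        (∀ A ∈ F, IsCompact A ∧ 1 ≤ Metric.diam A) →
        ∃ K : Set (EuclideanSpace ℝ (Fin d)),
          Convex ℝ K ∧ 1 - δ ≤ Metric.diam K ∧
          lam * (F.card.choose (2 * d) : ℝ) ≤
            ({A : Finset (Set (EuclideanSpace ℝ (Fin d))) |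
              A ⊆ F ∧ A.card = 2 * d ∧
                K ⊆ convexHull ℝ (⋃₀ (A : Set (Set (EuclideanSpace ℝ (Fin d)))))}.ncard : ℝ) := by
  have : NeZero d := ⟨hd.ne'⟩
  obtain ⟨lam, hlam, h⟩ := selection_lemma_for_diameter_general
    (E := EuclideanSpace ℝ (Fin d)) (sub_lt_self 1 hδ0)
  refine ⟨lam, hlam, fun F hF hA => ?_⟩
  obtain ⟨a, b, hab, hdepth⟩ := h _ F id (by simpa using hF) fun A hAF => by
    simpa using ENNReal.ofReal_le_of_le_toReal (hA A hAF).2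
  refine ⟨segment ℝ a b, convex_segment a b, hab.trans (dist_le_diam_segment a b), ?_⟩
  rwa [hullDepth_id, finrank_euclideanSpace_fin] at hdepth
end

section
/- Let d be a positive integer, let p ≥ q ≥ 2d be positive integers, and let 0 < δ < 1. There is a constant B = B(p,q,d,δ) such that for every finite family 𝓕 of at least p compact convex sets in ℝ^d satisfying the diameter (p,q) condition, the fractional diameter packing number satisfies ν*_{δ/2}(𝓕) ≤ B. -/
/-!
Draw `p` sets independently with probability proportional to `w`. By the `(p, q)` condition either
two of the draws coincide or at least `2d` of them contain a common segment that, for some `u` in a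
fixed finite net of directions, has endpoints `x`, `y` with `⟪x - y, u⟫` equal to a prescribed
`r > 0`. Such pairs `(x, y)` form a hyperplane of dimension `2d - 1`, in which Helly's theorem,
applied to the sets and the open ball reaching to the least-norm point of their intersection, shows
that one of the sets can be left out without changing this least-norm point. Hence one draw is a set
that contains a pair determined by the others, and since the packing condition bounds the total
weight of the sets containing a given pair at distance at least `r`, this has probability at most
`1 / ∑ w`. The number of possible events is bounded, and their probabilities add up to at least `1`.
-/

open Function Module

section Sampling

variable {ι κ : Type*} [Fintype κ] [DecidableEq κ]

lemma prod_update_mul_apply (f : κ → ι) (j : κ) (a : ι) (w : ι → ℝ) :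
    (∏ k, w (update f j a k)) * w (f j) = w a * ∏ k, w (f k) := by
  rw [Fintype.prod_eq_mul_prod_compl j, Fintype.prod_eq_mul_prod_compl j fun k ↦ w (f k),
    update_self, Finset.prod_congr rfl fun k hk ↦ by
      rw [update_of_ne (by simpa using hk)]]
  ring

variable [Fintype ι] {w : ι → ℝ}

lemma sum_sum_update_swap {M : Type*} [AddCommMonoid M] (j : κ) (G : (κ → ι) → ι → M) :
    ∑ f, ∑ a, G (update f j a) (f j) = ∑ f, ∑ a, G f a := by
  let swap : (κ → ι) × ι → (κ → ι) × ι := fun x ↦ (update x.1 j x.2, x.1 j)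
  have hswap : Involutive swap := fun x ↦ by simp [swap]
  rw [← Fintype.sum_prod_type', ← Fintype.sum_prod_type']
  exact Equiv.sum_comp (hswap.toPerm swap) fun x ↦ G x.1 x.2

lemma sum_prod_eq_sum_pow (w : ι → ℝ) :
    ∑ f : κ → ι, ∏ k, w (f k) = (∑ a, w a) ^ Fintype.card κ := by
  rw [← Fintype.prod_sum fun _ : κ ↦ w, Finset.prod_const, Finset.card_univ]

lemma sum_mul_sum_indicator_prod_le (hw : ∀ a, 0 ≤ w a) {S : Set (κ → ι)} (j : κ)
    (hS : ∀ f, ∑ a, {a | update f j a ∈ S}.indicator w a ≤ 1) :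
    (∑ a, w a) * ∑ f, S.indicator (fun f ↦ ∏ k, w (f k)) f ≤ (∑ a, w a) ^ Fintype.card κ := by
  classical
  calc (∑ a, w a) * ∑ f, S.indicator (fun f ↦ ∏ k, w (f k)) f
      = ∑ f, ∑ a, S.indicator (fun f ↦ ∏ k, w (f k)) f * w a := by
        rw [mul_comm, Finset.sum_mul_sum]
    _ = ∑ f, ∑ a, S.indicator (fun f ↦ ∏ k, w (f k)) (update f j a) * w (f j) :=
        (sum_sum_update_swap j _).symm
    _ = ∑ f, (∑ a, {a | update f j a ∈ S}.indicator w a) * ∏ k, w (f k) := by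
        simp only [Finset.sum_mul, Set.indicator_apply, Set.mem_ofPred_eq, ite_mul, zero_mul,
          prod_update_mul_apply]
    _ ≤ ∑ f : κ → ι, ∏ k, w (f k) := Finset.sum_le_sum fun f _ ↦
        mul_le_of_le_one_left (Finset.prod_nonneg fun k _ ↦ hw (f k)) (hS f)
    _ = (∑ a, w a) ^ Fintype.card κ := sum_prod_eq_sum_pow w

end Sampling

lemma sum_le_card_of_cover {ι κ β : Type*} [Fintype ι] [Finite κ] [DecidableEq κ] [Fintype β]
    {w : ι → ℝ} (hw : ∀ a, 0 ≤ w a) (S : β → Set (κ → ι)) (j : β → κ) (hcover : ∀ f, ∃ b, f ∈ S b)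
    (hS : ∀ b f, ∑ a, {a | update f (j b) a ∈ S b}.indicator w a ≤ 1) :
    ∑ a, w a ≤ Fintype.card β := by
  classical
  have := Fintype.ofFinite κ
  obtain hW | hW := (Finset.sum_nonneg fun a _ ↦ hw a : 0 ≤ ∑ a, w a).eq_or_lt
  · exact hW ▸ Nat.cast_nonneg _
  have hprod : ∀ f : κ → ι, 0 ≤ ∏ k, w (f k) := fun f ↦ Finset.prod_nonneg fun k _ ↦ hw (f k)
  have hunion : ∀ f, ∏ k, w (f k) ≤ ∑ b, (S b).indicator (fun f ↦ ∏ k, w (f k)) f := fun f ↦ by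
    obtain ⟨b, hb⟩ := hcover f
    refine (Set.indicator_of_mem hb (fun f ↦ ∏ k, w (f k))).ge.trans ?_
    exact Finset.single_le_sum (f := fun b ↦ (S b).indicator (fun f ↦ ∏ k, w (f k)) f)
      (fun b _ ↦ Set.indicator_nonneg (fun f _ ↦ hprod f) f) (Finset.mem_univ b)
  refine le_of_mul_le_mul_right ?_ (pow_pos hW (Fintype.card κ))
  calc (∑ a, w a) * (∑ a, w a) ^ Fintype.card κ
      = (∑ a, w a) * ∑ f : κ → ι, ∏ k, w (f k) := by rw [sum_prod_eq_sum_pow]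
    _ ≤ (∑ a, w a) * ∑ f, ∑ b, (S b).indicator (fun f ↦ ∏ k, w (f k)) f := by
        gcongr with f; exact hunion f
    _ = ∑ b, (∑ a, w a) * ∑ f, (S b).indicator (fun f ↦ ∏ k, w (f k)) f := by
        rw [Finset.sum_comm, Finset.mul_sum]
    _ ≤ ∑ _b : β, (∑ a, w a) ^ Fintype.card κ :=
        Finset.sum_le_sum fun b _ ↦ sum_mul_sum_indicator_prod_le hw (j b) (hS b)
    _ = Fintype.card β * (∑ a, w a) ^ Fintype.card κ := by simp

section LeastNorm

lemma nonempty_inter_biInter_of_erase {𝕜 V κ : Type*} [Field 𝕜] [LinearOrder 𝕜]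
    [IsStrictOrderedRing 𝕜] [AddCommGroup V] [Module 𝕜 V] [FiniteDimensional 𝕜 V]
    [DecidableEq κ] {C : Set V} {K : κ → Set V} {Q : Finset κ} (hC : Convex 𝕜 C)
    (hK : ∀ k ∈ Q, Convex 𝕜 (K k)) (hQ : finrank 𝕜 V < Q.card)
    (hne : (⋂ k ∈ Q, K k).Nonempty)
    (herase : ∀ i ∈ Q, (C ∩ ⋂ k ∈ Q.erase i, K k).Nonempty) :
    (C ∩ ⋂ k ∈ Q, K k).Nonempty := by
  let G : Option κ → Set V := fun o ↦ o.elim C K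
  suffices (⋂ o ∈ Q.insertNone, G o).Nonempty by
    obtain ⟨x, hx⟩ := this
    exact ⟨x, Set.mem_iInter₂.1 hx none Finset.none_mem_insertNone, Set.mem_iInter₂.2 fun k hk ↦
      Set.mem_iInter₂.1 hx (some k) (Finset.some_mem_insertNone.2 hk)⟩
  refine Convex.helly_theorem' (𝕜 := 𝕜) ?_ fun I hI hcard ↦ ?_
  · rintro (_ | k) hk
    · exact hC
    · exact hK k (Finset.some_mem_insertNone.1 hk)
  obtain ⟨_ | i, hiQ, hiI⟩ := Finset.exists_mem_notMem_of_card_lt_card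
    (show I.card < Q.insertNone.card by rw [Finset.card_insertNone]; omega)
  · obtain ⟨x, hx⟩ := hne
    refine ⟨x, Set.mem_iInter₂.2 ?_⟩
    rintro (_ | k) hk
    · exact absurd hk hiI
    · exact Set.mem_iInter₂.1 hx k (Finset.some_mem_insertNone.1 (hI hk))
  · obtain ⟨x, hxC, hx⟩ := herase i (Finset.some_mem_insertNone.1 hiQ)
    refine ⟨x, Set.mem_iInter₂.2 ?_⟩
    rintro (_ | k) hk
    · exact hxC
    · have hki : k ≠ i := fun h ↦ hiI (h ▸ hk)
      exact Set.mem_iInter₂.1 hx k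
        (Finset.mem_erase.2 ⟨hki, Finset.some_mem_insertNone.1 (hI hk)⟩)

variable {V : Type*} [NormedAddCommGroup V]

/-- `v` is a point of least norm in `K`. -/
def IsLeastNorm (K : Set V) (v : V) : Prop := v ∈ K ∧ IsMinOn norm K v

lemma exists_isLeastNorm [ProperSpace V] {K : Set V} (hK : IsClosed K) (hne : K.Nonempty) :
    ∃ v, IsLeastNorm K v := by
  obtain ⟨v, hv, hdist⟩ := hK.exists_infDist_eq_dist hne 0
  refine ⟨v, hv, fun x hx ↦ ?_⟩
  simpa [hdist] using Metric.infDist_le_dist_of_mem (x := 0) hx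

variable [NormedSpace ℝ V]

lemma IsLeastNorm.unique [StrictConvexSpace ℝ V] {K : Set V} (hK : Convex ℝ K) {v v' : V}
    (hv : IsLeastNorm K v) (hv' : IsLeastNorm K v') : v = v' := by
  by_contra hne
  have hmid : (1 / 2 : ℝ) • v + (1 / 2 : ℝ) • v' ∈ K :=
    hK hv.1 hv'.1 (by norm_num) (by norm_num) (by norm_num)
  exact (norm_combo_lt_of_ne le_rfl (hv'.2 hv.1) hne (by norm_num) (by norm_num)
    (by norm_num)).not_ge (hv.2 hmid)

lemma IsLeastNorm.exists_erase [FiniteDimensional ℝ V] {κ : Type*} [DecidableEq κ]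
    {K : κ → Set V} {Q : Finset κ} {v : V} (hK : ∀ k ∈ Q, Convex ℝ (K k))
    (hQ : finrank ℝ V < Q.card) (hv : IsLeastNorm (⋂ k ∈ Q, K k) v) :
    ∃ i ∈ Q, IsLeastNorm (⋂ k ∈ Q.erase i, K k) v := by
  by_contra! hsmaller
  have hball : ∀ i ∈ Q, (Metric.ball 0 ‖v‖ ∩ ⋂ k ∈ Q.erase i, K k).Nonempty := fun i hi ↦ by
    have hv' : v ∈ ⋂ k ∈ Q.erase i, K k :=
      Set.biInter_subset_biInter_left (Finset.erase_subset i Q) hv.1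
    obtain ⟨x, hx, hxv⟩ : ∃ x ∈ ⋂ k ∈ Q.erase i, K k, ‖x‖ < ‖v‖ := by
      by_contra! hmin
      exact hsmaller i hi ⟨hv', hmin⟩
    exact ⟨x, mem_ball_zero_iff.2 hxv, hx⟩
  obtain ⟨x, hxv, hxK⟩ :=
    nonempty_inter_biInter_of_erase (convex_ball 0 ‖v‖) hK hQ ⟨v, hv.1⟩ hball
  exact (mem_ball_zero_iff.1 hxv).not_ge (hv.2 hxK)

end LeastNorm

section PointPacking

variable {ι κ N V : Type*} [DecidableEq κ]

/-- The tuples of indices whose entries at the positions `i` and `j` coincide although `i ≠ j`. -/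
def collisions (ι : Type*) (i j : κ) : Set (κ → ι) := {f | i ≠ j ∧ f i = f j}

/-- The tuples `f` of sets of the family `K` such that the set at position `i` contains a
least-norm point of the intersection of the sets at the other positions of `Q`. -/
def leastNormCaptures [NormedAddCommGroup V] (K : ι → Set V) (Q : Finset κ) (i : κ) :
    Set (κ → ι) :=
  {f | ∃ v ∈ K (f i), IsLeastNorm (⋂ k ∈ Q.erase i, K (f k)) v}

variable [Fintype ι] {w : ι → ℝ}

lemma sum_slice_collisions_le (hw0 : ∀ a, 0 ≤ w a) (hw1 : ∀ a, w a ≤ 1) (i j : κ) (f : κ → ι) :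
    ∑ a, {a | update f i a ∈ collisions ι i j}.indicator w a ≤ 1 := by
  classical
  have hslice : {a | update f i a ∈ collisions ι i j} ⊆ {f j} := by
    rintro a ⟨hij, ha⟩
    rwa [update_self, update_of_ne hij.symm] at ha
  calc ∑ a, {a | update f i a ∈ collisions ι i j}.indicator w a
      ≤ ∑ a, Set.indicator {f j} w a :=
        Finset.sum_le_sum fun a _ ↦ Set.indicator_le_indicator_of_subset hslice hw0 a
    _ = w (f j) := by simp [Set.indicator_apply]
    _ ≤ 1 := hw1 (f j)

lemma sum_slice_leastNormCaptures_le [NormedAddCommGroup V] [NormedSpace ℝ V]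
    [StrictConvexSpace ℝ V] {K : ι → Set V} (hK : ∀ a, Convex ℝ (K a)) (hw0 : ∀ a, 0 ≤ w a)
    (hpack : ∀ v, ∑ a, {a | v ∈ K a}.indicator w a ≤ 1) (Q : Finset κ) (i : κ) (f : κ → ι) :
    ∑ a, {a | update f i a ∈ leastNormCaptures K Q i}.indicator w a ≤ 1 := by
  have hrest : ∀ a, ⋂ k ∈ Q.erase i, K (update f i a k) = ⋂ k ∈ Q.erase i, K (f k) := fun a ↦
    Set.iInter₂_congr fun k hk ↦ by rw [update_of_ne (Finset.ne_of_mem_erase hk)]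
  have hmem : ∀ a, update f i a ∈ leastNormCaptures K Q i ↔
      ∃ v ∈ K a, IsLeastNorm (⋂ k ∈ Q.erase i, K (f k)) v := fun a ↦ by
    rw [leastNormCaptures, Set.mem_ofPred_eq, update_self, hrest]
  by_cases hex : ∃ v, IsLeastNorm (⋂ k ∈ Q.erase i, K (f k)) v
  · obtain ⟨v, hv⟩ := hex
    refine (Finset.sum_le_sum fun a _ ↦ ?_).trans (hpack v)
    refine Set.indicator_le_indicator_of_subset (fun b hb ↦ ?_) hw0 a
    obtain ⟨v', hv'b, hv'⟩ := (hmem b).1 hb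
    exact hv'.unique (convex_iInter₂ fun k _ ↦ hK (f k)) hv ▸ hv'b
  · have hempty : {a | update f i a ∈ leastNormCaptures K Q i} = ∅ :=
      Set.eq_empty_of_forall_notMem fun a ha ↦
        hex (((hmem a).1 ha).imp fun _ ↦ And.right)
    simp [hempty]

variable [Fintype N] [NormedAddCommGroup V] [NormedSpace ℝ V] [StrictConvexSpace ℝ V]
  [FiniteDimensional ℝ V]

lemma sum_le_of_forall_exists_isLeastNorm {p : ℕ} {K : N → ι → Set V}
    (hK : ∀ u a, Convex ℝ (K u a)) (hw0 : ∀ a, 0 ≤ w a) (hw1 : ∀ a, w a ≤ 1)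
    (hpack : ∀ u v, ∑ a, {a | v ∈ K u a}.indicator w a ≤ 1)
    (hpq : ∀ P : Finset ι, P.card = p → ∃ Q ⊆ P, finrank ℝ V < Q.card ∧
      ∃ u v, IsLeastNorm (⋂ a ∈ Q, K u a) v) :
    ∑ a, w a ≤ p ^ 2 + Fintype.card N * 2 ^ p * p := by
  let S : (Fin p × Fin p) ⊕ (N × Finset (Fin p) × Fin p) → Set (Fin p → ι) :=
    Sum.elim (fun x ↦ collisions ι x.1 x.2) (fun x ↦ leastNormCaptures (K x.1) x.2.1 x.2.2)
  have hcover : ∀ f, ∃ b, f ∈ S b := fun f ↦ by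
    by_cases hf : Injective f
    · obtain ⟨_, hQ, hcard, u, v, hv⟩ := hpq (Finset.univ.map ⟨f, hf⟩) (by simp)
      obtain ⟨Q, -, rfl⟩ := Finset.subset_map_iff.1 hQ
      rw [Finset.card_map] at hcard
      have hvf : IsLeastNorm (⋂ k ∈ Q, K u (f k)) v := by simpa using hv
      obtain ⟨i, hi, hvi⟩ := hvf.exists_erase (fun k _ ↦ hK u (f k)) hcard
      exact ⟨.inr (u, Q, i), v, Set.mem_iInter₂.1 hvf.1 i hi, hvi⟩
    · obtain ⟨i, j, hij, hne⟩ := not_injective_iff.1 hf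
      exact ⟨.inl (i, j), hne, hij⟩
  have hbound := sum_le_card_of_cover hw0 S (Sum.elim Prod.fst fun x ↦ x.2.2) hcover
    (by
      rintro (⟨i, j⟩ | ⟨u, Q, i⟩) f
      · exact sum_slice_collisions_le hw0 hw1 i j f
      · exact sum_slice_leastNormCaptures_le (hK u) hw0 (hpack u) Q i f)
  simpa [sq, mul_assoc] using hbound

lemma sum_le_of_forall_exists_nonempty_biInter {p : ℕ} {K : N → ι → Set V}
    (hK : ∀ u a, Convex ℝ (K u a)) (hw0 : ∀ a, 0 ≤ w a) (hw1 : ∀ a, w a ≤ 1)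
    (hpack : ∀ u v, ∑ a, {a | v ∈ K u a}.indicator w a ≤ 1)
    (hpq : ∀ P : Finset ι, P.card = p → ∃ Q ⊆ P, finrank ℝ V < Q.card ∧
      ∃ u, (⋂ a ∈ Q, K u a).Nonempty) :
    ∑ a, w a ≤ p ^ 2 + Fintype.card N * 2 ^ p * p := by
  have : ProperSpace V := FiniteDimensional.proper_real V
  choose Q hQP hQ u z hz using fun P : {P : Finset ι // P.card = p} ↦ hpq P.1 P.2
  -- Replacing each set by the convex hull of the finitely many chosen points makes it closed.
  let K' : N → ι → Set V := fun u a ↦ convexHull ℝ (Set.range z ∩ K u a)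
  have hK' : ∀ u a, K' u a ⊆ K u a := fun u a ↦ convexHull_min Set.inter_subset_right (hK u a)
  have hclosed : ∀ u a, IsClosed (K' u a) := fun u a ↦
    (((Set.finite_range z).inter_of_left (K u a)).isCompact_convexHull ℝ).isClosed
  refine sum_le_of_forall_exists_isLeastNorm (K := K') (fun u a ↦ convex_convexHull ℝ _) hw0 hw1
    (fun u v ↦ (Finset.sum_le_sum fun a _ ↦ ?_).trans (hpack u v)) fun P hP ↦ ?_
  · exact Set.indicator_le_indicator_of_subset (fun b hb ↦ hK' u b hb) hw0 a
  · refine ⟨Q ⟨P, hP⟩, hQP _, hQ _, u ⟨P, hP⟩, exists_isLeastNorm ?_ ⟨z ⟨P, hP⟩, ?_⟩⟩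
    · exact isClosed_biInter fun a _ ↦ hclosed _ a
    · exact Set.mem_iInter₂.2 fun a ha ↦ subset_convexHull ℝ _
        ⟨Set.mem_range_self _, Set.mem_iInter₂.1 (hz _) a ha⟩

end PointPacking

section Distance

lemma exists_affineMap_range_eq_hyperplane {𝕜 V W : Type*} [Field 𝕜] [AddCommGroup V] [Module 𝕜 V]
    [FiniteDimensional 𝕜 V] [AddCommGroup W] [Module 𝕜 W] [FiniteDimensional 𝕜 W]
    {L : W →ₗ[𝕜] 𝕜} (hL : L ≠ 0) (c : 𝕜) (hVW : finrank 𝕜 V + 1 = finrank 𝕜 W) :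
    ∃ Φ : V →ᵃ[𝕜] W, Set.range Φ = {x | L x = c} := by
  have hker : finrank 𝕜 V = finrank 𝕜 (LinearMap.ker L) := by
    have := Module.Dual.finrank_ker_add_one_of_ne_zero hL
    omega
  let ψ : V ≃ₗ[𝕜] LinearMap.ker L := LinearEquiv.ofFinrankEq _ _ hker
  obtain ⟨x₀, hx₀⟩ := LinearMap.surjective hL c
  refine ⟨((LinearMap.ker L).subtype ∘ₗ ψ.toLinearMap).toAffineMap + AffineMap.const 𝕜 V x₀, ?_⟩
  ext x
  constructor
  · rintro ⟨z, rfl⟩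
    simp [hx₀]
  · intro hx
    have hsub : x - x₀ ∈ LinearMap.ker L := by
      rw [LinearMap.mem_ker, map_sub, hx₀, sub_eq_zero]
      exact hx
    exact ⟨ψ.symm ⟨x - x₀, hsub⟩, by simp⟩

variable {E : Type*} [NormedAddCommGroup E] [InnerProductSpace ℝ E]

lemma exists_finset_unit_forall_mul_norm_le_inner [ProperSpace E] {c : ℝ} (hc : c < 1) :
    ∃ N : Finset E, (∀ u ∈ N, ‖u‖ = 1) ∧ ∀ v ≠ 0, ∃ u ∈ N, c * ‖v‖ ≤ inner ℝ v u := by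
  obtain ⟨t, ht, htfin, hcover⟩ :=
    (isCompact_sphere (0 : E) 1).finite_cover_balls (sub_pos.2 hc)
  refine ⟨htfin.toFinset, fun u hu ↦ by simpa using ht (htfin.mem_toFinset.1 hu), fun v hv ↦ ?_⟩
  set e := ‖v‖⁻¹ • v with he_def
  have he : ‖e‖ = 1 := by simpa using norm_smul_inv_norm (𝕜 := ℝ) hv
  obtain ⟨u, hu, hdist⟩ := Set.mem_iUnion₂.1 (hcover (mem_sphere_zero_iff_norm.2 he))
  refine ⟨u, htfin.mem_toFinset.2 hu, ?_⟩
  have hsub : inner ℝ e (e - u) ≤ 1 - c :=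
    calc inner ℝ e (e - u) ≤ ‖e‖ * ‖e - u‖ := real_inner_le_norm _ _
      _ ≤ 1 - c := by rw [he, one_mul, ← dist_eq_norm]; exact (Metric.mem_ball.1 hdist).le
  have hinner : c ≤ inner ℝ e u := by
    rw [inner_sub_right, real_inner_self_eq_norm_sq, he] at hsub
    linarith
  rwa [he_def, real_inner_smul_left, inv_mul_eq_div, le_div_iff₀ (norm_pos_iff.2 hv)] at hinner

lemma exists_mem_segment_inner_sub_eq {x y u : E} {r : ℝ} (hr : 0 < r)
    (hxy : r ≤ inner ℝ (x - y) u) : ∃ z ∈ segment ℝ x y, inner ℝ (x - z) u = r := by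
  have hpos : 0 < inner ℝ (x - y) u := hr.trans_le hxy
  refine ⟨AffineMap.lineMap x y (r / inner ℝ (x - y) u), ?_, ?_⟩
  · rw [segment_eq_image_lineMap]
    exact Set.mem_image_of_mem _ ⟨by positivity, (div_le_one hpos).2 hxy⟩
  · rw [← vsub_eq_sub, AffineMap.left_vsub_lineMap, vsub_eq_sub, real_inner_smul_left,
      div_mul_cancel₀ _ hpos.ne']

lemma exists_affineMap_range_eq_setOf_inner_sub [FiniteDimensional ℝ E] {V : Type*}
    [AddCommGroup V] [Module ℝ V] [FiniteDimensional ℝ V]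
    (hV : finrank ℝ V + 1 = 2 * finrank ℝ E) {u : E} (hu : u ≠ 0) (r : ℝ) :
    ∃ Φ : V →ᵃ[ℝ] E × E, Set.range Φ = {x | inner ℝ (x.1 - x.2) u = r} := by
  let L : E × E →ₗ[ℝ] ℝ := innerₛₗ ℝ u ∘ₗ (LinearMap.fst ℝ E E - LinearMap.snd ℝ E E)
  have hLapply : ∀ x, L x = inner ℝ (x.1 - x.2) u := fun x ↦ real_inner_comm _ _
  have hL : L ≠ 0 := fun h ↦ hu <| by simpa [hLapply] using LinearMap.congr_fun h (u, 0)
  simpa only [hLapply] using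
    exists_affineMap_range_eq_hyperplane hL r (by rw [hV, finrank_prod, two_mul])

lemma sum_le_of_forall_exists_le_inner [FiniteDimensional ℝ E] [Nontrivial E] {ι : Type*}
    [Fintype ι] {p : ℕ} {A : ι → Set E} {w : ι → ℝ} {N : Finset E} {r : ℝ}
    (hA : ∀ a, Convex ℝ (A a)) (hw0 : ∀ a, 0 ≤ w a) (hw1 : ∀ a, w a ≤ 1)
    (hN : ∀ u ∈ N, ‖u‖ = 1) (hr : 0 < r)
    (hpack : ∀ x y, r ≤ dist x y → ∑ a, {a | segment ℝ x y ⊆ A a}.indicator w a ≤ 1)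
    (hpq : ∀ P : Finset ι, P.card = p → ∃ Q ⊆ P, 2 * finrank ℝ E ≤ Q.card ∧
      ∃ u ∈ N, ∃ x ∈ ⋂ a ∈ Q, A a, ∃ y ∈ ⋂ a ∈ Q, A a, r ≤ inner ℝ (x - y) u) :
    ∑ a, w a ≤ p ^ 2 + N.card * 2 ^ p * p := by
  have hE : 0 < finrank ℝ E := finrank_pos
  let V := EuclideanSpace ℝ (Fin (2 * finrank ℝ E - 1))
  have hV : finrank ℝ V + 1 = 2 * finrank ℝ E := by rw [finrank_euclideanSpace_fin]; omega
  have hN0 : ∀ u ∈ N, u ≠ 0 := fun u hu ↦ norm_ne_zero_iff.1 (by simp [hN u hu])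
  choose Φ hΦ using fun u : N ↦ exists_affineMap_range_eq_setOf_inner_sub hV (hN0 u u.2) r
  simp only [Set.ext_iff, Set.mem_range, Set.mem_ofPred_eq] at hΦ
  have hdist : ∀ u v, r ≤ dist (Φ u v).1 (Φ u v).2 := fun u v ↦
    calc r = inner ℝ ((Φ u v).1 - (Φ u v).2) u.1 := ((hΦ u _).1 ⟨v, rfl⟩).symm
      _ ≤ ‖(Φ u v).1 - (Φ u v).2‖ * ‖u.1‖ := real_inner_le_norm _ _
      _ = dist (Φ u v).1 (Φ u v).2 := by rw [hN u u.2, mul_one, dist_eq_norm]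
  rw [← Fintype.card_coe N]
  refine sum_le_of_forall_exists_nonempty_biInter (K := fun u a ↦ Φ u ⁻¹' A a ×ˢ A a)
    (fun u a ↦ ((hA a).prod (hA a)).affine_preimage (Φ u)) hw0 hw1
    (fun u v ↦ (Finset.sum_le_sum fun a _ ↦ ?_).trans (hpack _ _ (hdist u v))) fun P hP ↦ ?_
  · exact Set.indicator_le_indicator_of_subset
      (fun b hb ↦ (hA b).segment_subset hb.1 hb.2) hw0 a
  · obtain ⟨Q, hQP, hQ, u, hu, x, hx, y, hy, hxy⟩ := hpq P hP
    obtain ⟨z, hz, hxz⟩ := exists_mem_segment_inner_sub_eq hr hxy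
    have hzA : z ∈ ⋂ a ∈ Q, A a := (convex_iInter₂ fun a _ ↦ hA a).segment_subset hx hy hz
    obtain ⟨v, hv⟩ := (hΦ ⟨u, hu⟩ (x, z)).2 hxz
    refine ⟨Q, hQP, by omega, ⟨u, hu⟩, v, Set.mem_iInter₂.2 fun a ha ↦ ?_⟩
    rw [Set.mem_preimage, hv]
    exact ⟨Set.mem_iInter₂.1 hx a ha, Set.mem_iInter₂.1 hzA a ha⟩

end Distance

lemma diam_segment {E : Type*} [SeminormedAddCommGroup E] [NormedSpace ℝ E] (x y : E) :
    Metric.diam (segment ℝ x y) = dist x y := by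
  rw [← convexHull_pair, convexHull_diam, Metric.diam_pair]

lemma exists_lt_dist_of_lt_diam_s14 {X : Type*} [PseudoMetricSpace X] {S : Set X} {c : ℝ} (hc : 0 ≤ c)
    (hS : c < Metric.diam S) : ∃ x ∈ S, ∃ y ∈ S, c < dist x y := by
  by_contra! hle
  exact hS.not_ge (Metric.diam_le_of_forall_dist_le hc hle)

theorem fractional_packing_bounded_general {E : Type*} [NormedAddCommGroup E]
    [InnerProductSpace ℝ E] [FiniteDimensional ℝ E] [Nontrivial E] (p : ℕ) {q : ℕ}
    (hq : 2 * finrank ℝ E ≤ q) {ρ : ℝ} (hρ : ρ < 1) :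
    ∃ B : ℝ, ∀ F : Finset (Set E),
      (∀ A ∈ F, Convex ℝ A) →
      (∀ P ⊆ F, P.card = p → ∃ Q ⊆ P, Q.card = q ∧ 1 ≤ Metric.diam (⋂₀ (Q : Set (Set E)))) →
      ∀ w : Set E → ℝ, (∀ A ∈ F, 0 ≤ w A ∧ w A ≤ 1) →
        (∀ C : Set E, Convex ℝ C → ρ ≤ Metric.diam C →
          ∑ A ∈ F, {A' : Set E | C ⊆ A'}.indicator w A ≤ 1) →
        ∑ A ∈ F, w A ≤ B := by
  obtain ⟨r, hmax, hr1⟩ := exists_between (max_lt hρ one_pos)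
  obtain ⟨s, hrs, hs1⟩ := exists_between hr1
  obtain ⟨hρr, hr⟩ := max_lt_iff.1 hmax
  have hs : 0 < s := hr.trans hrs
  have : ProperSpace E := FiniteDimensional.proper_real E
  obtain ⟨N, hN1, hN⟩ :=
    exists_finset_unit_forall_mul_norm_le_inner (E := E) ((div_lt_one hs).2 hrs)
  refine ⟨p ^ 2 + N.card * 2 ^ p * p, fun F hF hpq w hw hpack ↦ ?_⟩
  rw [← Finset.sum_coe_sort F]
  refine sum_le_of_forall_exists_le_inner (A := fun A : F ↦ A.1) (fun A ↦ hF A A.2)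
    (fun A ↦ (hw A A.2).1) (fun A ↦ (hw A A.2).2) hN1 hr (fun x y hxy ↦ ?_) fun P hP ↦ ?_
  · have hdiam : ρ ≤ Metric.diam (segment ℝ x y) := by
      rw [diam_segment]
      exact hρr.le.trans hxy
    exact (Finset.sum_coe_sort F ({A' | segment ℝ x y ⊆ A'}.indicator w)).trans_le
      (hpack _ (convex_segment x y) hdiam)
  · obtain ⟨_, hsub, hQ, hdiam⟩ := hpq (P.map (.subtype _)) (Finset.map_subtype_subset P) (by simpa)
    obtain ⟨Q, hQP, rfl⟩ := Finset.subset_map_iff.1 hsub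
    obtain ⟨x, hx, y, hy, hxy⟩ := exists_lt_dist_of_lt_diam_s14 hs.le (hs1.trans_le hdiam)
    have hne : x - y ≠ 0 := sub_ne_zero.2 (dist_pos.1 (hs.trans hxy))
    obtain ⟨u, hu, huxy⟩ := hN _ hne
    rw [Finset.card_map] at hQ
    refine ⟨Q, hQP, hQ ▸ hq, u, hu, x, by simpa using hx, y, by simpa using hy, ?_⟩
    calc r = r / s * s := (div_mul_cancel₀ r hs.ne').symm
      _ ≤ r / s * ‖x - y‖ := by rw [← dist_eq_norm]; gcongr
      _ ≤ inner ℝ (x - y) u := huxy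

/-- If `p ≥ q ≥ 2d` and a finite family `𝓕` of at least `p` compact convex sets in `ℝ^d`
satisfies the diameter `(p,q)` condition, then the fractional diameter packing number
`ν*_{δ/2}(𝓕)` is bounded by a constant `B = B(p,q,d,δ)`.  The bound `ν*_{δ/2}(𝓕) ≤ B` is
expressed by bounding `∑_{F ∈ 𝓕} w(F)` for every feasible weight function
`w : 𝓕 → [0,1]`, i.e. every `w` with `∑ {F ∈ 𝓕 : C ⊆ F} w(F) ≤ 1` for every convex set
`C` of diameter at least `1 - δ/2`. -/
theorem fractional_packing_bounded (d p q : ℕ) (hd : 0 < d) (hq : 2 * d ≤ q) (hpq : q ≤ p)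
    (δ : ℝ) (hδ0 : 0 < δ) (hδ1 : δ < 1) :
    ∃ B : ℝ,
      ∀ F : Finset (Set (EuclideanSpace ℝ (Fin d))),
        p ≤ F.card →
        (∀ A ∈ F, IsCompact A ∧ Convex ℝ A) →
        (∀ P ⊆ F, P.card = p → ∃ Q ⊆ P, Q.card = q ∧
          1 ≤ Metric.diam (⋂₀ (Q : Set (Set (EuclideanSpace ℝ (Fin d)))))) →
        ∀ w : Set (EuclideanSpace ℝ (Fin d)) → ℝ,
          (∀ A ∈ F, 0 ≤ w A ∧ w A ≤ 1) →
          (∀ C : Set (EuclideanSpace ℝ (Fin d)), Convex ℝ C → 1 - δ / 2 ≤ Metric.diam C →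
            ∑ A ∈ F, {A' : Set (EuclideanSpace ℝ (Fin d)) | C ⊆ A'}.indicator w A ≤ 1) →
          ∑ A ∈ F, w A ≤ B := by
  have : Nonempty (Fin d) := ⟨⟨0, hd⟩⟩
  obtain ⟨B, hB⟩ := fractional_packing_bounded_general (E := EuclideanSpace ℝ (Fin d)) p
    (q := q) (by simpa) (by linarith : 1 - δ / 2 < 1)
  exact ⟨B, fun F _ hF ↦ hB F fun A hA ↦ (hF A hA).2⟩
end
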